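/- arXiv:2006.02283 — 2 statements merged into one kernel-verified Lean document; each statement's English description precedes it below -/
import Mathlib

section
/- Let U and V be real Hilbert spaces, B : U × V → ℝ a bounded bilinear form, F : V → ℝ a bounded linear functional, and let U^h ⊆ U and V^h ⊆ V be closed subspaces. Define the discrete trial-to-test operator T^h : U → V^h by (T^h u, v)_V = B(u, v) for all v ∈ V^h. Then a pair (u^h, Ê^h) ∈ U^h × V^h satisfies the mixed (saddle-point) system (Ê^h, v)_V − B(u^h, v) = −F(v) for all v ∈ V^h and B(p, Ê^h is replaced by its role as test argument, i.e. the constraint) B(p, ·) evaluated at Ê^h: B(p, Ê^h) = 0 for all p ∈ U^h, if and only if u^h solves the Petrov–Galerkin problem with optimal test space: B(u^h, T^h p) = F(T^h p) for all p ∈ U^h, and Ê^h ∈ V^h is the unique element of V^h with (Ê^h, v)_V = B(u^h, v) − F(v) for all v ∈ V^h. (This is the equivalence between the AVS-FE discretization with on-the-fly optimal test functions and its mixed saddle-point reformulation.) -/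
open scoped RealInnerProductSpace

/-- Equivalence between the mixed (saddle-point) formulation of the AVS-FE method and the
Petrov–Galerkin problem with optimal test functions computed via the discrete
trial-to-test operator `T^h`. -/
theorem mixed_saddle_point_equivalence
    {U V : Type*}
    [NormedAddCommGroup U] [InnerProductSpace ℝ U] [CompleteSpace U]
    [NormedAddCommGroup V] [InnerProductSpace ℝ V] [CompleteSpace V]
    (B : U →ₗ[ℝ] V →ₗ[ℝ] ℝ) (M : ℝ)
    (hbound : ∀ (u : U) (v : V), |B u v| ≤ M * ‖u‖ * ‖v‖)
    (F : V →L[ℝ] ℝ)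
    (Uh : Submodule ℝ U) (Vh : Submodule ℝ V)
    (hUh : IsClosed (Uh : Set U)) (hVh : IsClosed (Vh : Set V))
    (Th : U → V) (hThmem : ∀ u : U, Th u ∈ Vh)
    (hTh : ∀ (u : U), ∀ v ∈ Vh, ⟪Th u, v⟫ = B u v)
    (uh : U) (huh : uh ∈ Uh) (Eh : V) (hEhmem : Eh ∈ Vh) :
    ((∀ v ∈ Vh, ⟪Eh, v⟫ - B uh v = -(F v)) ∧ (∀ p ∈ Uh, B p Eh = 0))
      ↔
    ((∀ p ∈ Uh, B uh (Th p) = F (Th p)) ∧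
      (∀ v ∈ Vh, ⟪Eh, v⟫ = B uh v - F v) ∧
      (∀ E' : V, E' ∈ Vh → (∀ v ∈ Vh, ⟪E', v⟫ = B uh v - F v) → E' = Eh)) := by
  have key : ∀ p : U, B p Eh = ⟪Eh, Th p⟫ := fun p => by
    rw [real_inner_comm]
    exact (hTh p Eh hEhmem).symm
  constructor
  · rintro ⟨h1, h2⟩
    have h3 : ∀ v ∈ Vh, ⟪Eh, v⟫ = B uh v - F v := fun v hv => by
      linarith [h1 v hv]
    refine ⟨fun p hp => ?_, h3, fun E' hE' h => ?_⟩
    · have e1 := h2 p hp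
      rw [key p] at e1
      linarith [h3 (Th p) (hThmem p)]
    · have hm : E' - Eh ∈ Vh := Vh.sub_mem hE' hEhmem
      have h0 : ⟪E' - Eh, E' - Eh⟫ = 0 := by
        rw [inner_sub_left, h _ hm, h3 _ hm, sub_self]
      exact sub_eq_zero.mp (inner_self_eq_zero.mp h0)
  · rintro ⟨h1, h2, -⟩
    refine ⟨fun v hv => by linarith [h2 v hv], fun p hp => ?_⟩
    rw [key p, h2 _ (hThmem p), h1 p hp, sub_self]
end

section
/- Let U and V be real Hilbert spaces and B : U × V → ℝ a bounded bilinear form satisfying the inf-sup condition with constant γ > 0, and let T : U → V be the trial-to-test operator defined by (Tu, v)_V = B(u, v) for all v ∈ V. Let F : V → ℝ be a bounded linear functional and suppose u ∈ U satisfies B(u, v) = F(v) for all v ∈ V. Let U^h ⊆ U be a finite-dimensional subspace. Then there exists a unique u^h ∈ U^h satisfying B(u^h, Tw) = F(Tw) for all w ∈ U^h, and this discrete solution is the best approximation of u from U^h in the energy norm: ‖u − u^h‖_B = min over w ∈ U^h of ‖u − w‖_B. Consequently ‖u − u^h‖_U ≤ (M/γ) inf over w ∈ U^h of ‖u − w‖_U,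 where M is the continuity constant of B. -/
open scoped RealInnerProductSpace

/-- The discrete Petrov–Galerkin problem with optimal test functions has a unique solution
in a finite-dimensional trial subspace, this solution is the best approximation of the
exact solution in the energy norm, and quasi-optimality holds in the `U`-norm with
constant `M/γ`. -/
theorem discrete_solution_best_approximation
    {U V : Type*}
    [NormedAddCommGroup U] [InnerProductSpace ℝ U] [CompleteSpace U]
    [NormedAddCommGroup V] [InnerProductSpace ℝ V] [CompleteSpace V]
    (B : U →ₗ[ℝ] V →ₗ[ℝ] ℝ) (M : ℝ) (hM : 0 < M)
    (hbound : ∀ (u : U) (v : V), |B u v| ≤ M * ‖u‖ * ‖v‖)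
    (γ : ℝ) (hγ : 0 < γ)
    (hinfsup : ∀ u : U, γ * ‖u‖ ≤ ⨆ v : {v : V // v ≠ 0}, |B u v.1| / ‖v.1‖)
    (T : U → V) (hT : ∀ (u : U) (v : V), ⟪T u, v⟫ = B u v)
    (F : V →L[ℝ] ℝ) (u : U) (hu : ∀ v : V, B u v = F v)
    (Uh : Submodule ℝ U) [FiniteDimensional ℝ Uh] :
    (∃! uh : U, uh ∈ Uh ∧ ∀ w ∈ Uh, B uh (T w) = F (T w)) ∧
      (∀ uh : U, uh ∈ Uh → (∀ w ∈ Uh, B uh (T w) = F (T w)) →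
        ((∀ w ∈ Uh,
            (⨆ v : {v : V // v ≠ 0}, |B (u - uh) v.1| / ‖v.1‖) ≤
              ⨆ v : {v : V // v ≠ 0}, |B (u - w) v.1| / ‖v.1‖) ∧
          (∀ w ∈ Uh, ‖u - uh‖ ≤ (M / γ) * ‖u - w‖))) := by
  let TL : U →ₗ[ℝ] V :=
    { toFun := T
      map_add' := fun x y => by
        refine ext_inner_right ℝ fun v => ?_
        rw [inner_add_left, hT, hT, hT, map_add, LinearMap.add_apply]
      map_smul' := fun c x => by
        refine ext_inner_right ℝ fun v => ?_
        rw [RingHom.id_apply, real_inner_smul_left, hT, hT, map_smul, LinearMap.smul_apply,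
          smul_eq_mul] }
  have hsub : ∀ x y, T (x - y) = T x - T y := fun x y => map_sub TL x y
  have hE : ∀ x : U, (⨆ v : {v : V // v ≠ 0}, |B x v.1| / ‖v.1‖) = ‖T x‖ := by
    intro x
    have hb : ∀ v : {v : V // v ≠ 0}, |B x v.1| / ‖v.1‖ ≤ ‖T x‖ := by
      intro v
      rw [div_le_iff₀ (norm_pos_iff.2 v.2), ← hT]
      exact abs_real_inner_le_norm _ _
    apply le_antisymm
    · exact Real.iSup_le hb (norm_nonneg _)
    · by_cases h : T x = 0
      · rw [h, norm_zero]
        exact Real.iSup_nonneg fun v => by positivity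
      · refine le_trans (le_of_eq ?_)
          (le_ciSup (f := fun v : {v : V // v ≠ 0} => |B x v.1| / ‖v.1‖)
            ⟨‖T x‖, by rintro _ ⟨v, rfl⟩; exact hb v⟩ ⟨T x, h⟩)
        have hne : ‖T x‖ ≠ 0 := norm_ne_zero_iff.2 h
        simp only
        rw [← hT, real_inner_self_eq_norm_mul_norm, abs_of_nonneg (by positivity)]
        field_simp
  have hcoer : ∀ x : U, γ * ‖x‖ ≤ ‖T x‖ := fun x => (hinfsup x).trans_eq (hE x)
  have hTM : ∀ x : U, ‖T x‖ ≤ M * ‖x‖ := by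
    intro x
    rw [← hE x]
    refine Real.iSup_le (fun v => ?_) (by positivity)
    rw [div_le_iff₀ (norm_pos_iff.2 v.2)]
    exact hbound _ _
  have hbest : ∀ uh : U, uh ∈ Uh → (∀ w ∈ Uh, B uh (T w) = F (T w)) →
      ∀ w ∈ Uh, ‖T (u - uh)‖ ≤ ‖T (u - w)‖ := by
    intro uh huh h w hw
    have horth : ⟪T (u - uh), T (uh - w)⟫ = 0 := by
      rw [hT, map_sub, LinearMap.sub_apply, hu, h _ (Uh.sub_mem huh hw), sub_self]
    have hsum : T (u - w) = T (u - uh) + T (uh - w) := by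
      rw [hsub, hsub, hsub]; abel
    have h2 := norm_add_sq_eq_norm_sq_add_norm_sq_of_inner_eq_zero _ _ horth
    rw [← hsum] at h2
    nlinarith [norm_nonneg (T (u - uh)), norm_nonneg (T (u - w)), norm_nonneg (T (uh - w))]
  refine ⟨?_, fun uh huh h => ⟨fun w hw => ?_, fun w hw => ?_⟩⟩
  · obtain ⟨uh, huh, hproj⟩ := Submodule.mem_map.1 ((Uh.map TL).starProjection_apply_mem (T u))
    refine ⟨uh, ⟨huh, fun w hw => ?_⟩, ?_⟩
    · have h0 := (Uh.map TL).starProjection_inner_eq_zero (T u) (T w)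
        (Submodule.mem_map_of_mem (f := TL) hw)
      rw [← hproj, inner_sub_left] at h0
      change ⟪T u, T w⟫ - ⟪T uh, T w⟫ = 0 at h0
      rw [hT, hT, hu] at h0
      linarith
    · rintro y ⟨hy, hyB⟩
      have h0 := (Uh.map TL).starProjection_inner_eq_zero (T u) (T (y - uh))
        (Submodule.mem_map_of_mem (f := TL) (Uh.sub_mem hy huh))
      rw [← hproj, inner_sub_left] at h0
      change ⟪T u, T (y - uh)⟫ - ⟪T uh, T (y - uh)⟫ = 0 at h0
      have h1 := hyB (y - uh) (Uh.sub_mem hy huh)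
      rw [← hu, ← hT, ← hT] at h1
      have h2 : ⟪T (y - uh), T (y - uh)⟫ = 0 := by
        nth_rewrite 1 [hsub]
        rw [inner_sub_left]; linarith
      have h3 := hcoer (y - uh)
      rw [inner_self_eq_zero.1 h2, norm_zero] at h3
      have h4 : ‖y - uh‖ = 0 :=
        le_antisymm (by by_contra hc; push Not at hc; nlinarith [mul_pos hγ hc]) (norm_nonneg _)
      exact sub_eq_zero.1 (norm_eq_zero.1 h4)
  · rw [hE, hE]
    exact hbest uh huh h w hw
  · have h1 := (hcoer (u - uh)).trans ((hbest uh huh h w hw).trans (hTM (u - w)))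
    rw [div_mul_eq_mul_div, le_div_iff₀ hγ]
    linarith
end
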